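/- Let n ≥ 1, 1 ≤ p₁ ≤ p₂ < ∞, 0 < s₁ ≤ s₂ < ∞, q ∈ [1,∞), and set σ = s₂ − s₁ + n/p₁ − n/p₂. If σ > 0, then for every Schwartz function f on ℝⁿ, lim_{t → 0⁺} t^{σ/2} ‖e^{tΔ}f‖_{B^{s₂}_{p₂,q}} = 0. -/

import Mathlib

open MeasureTheory Real Filter
open scoped ENNReal FourierTransform

noncomputable section

/-- `ℝⁿ` as a Euclidean space. -/
abbrev Rn (n : ℕ) : Type := EuclideanSpace ℝ (Fin n)

variable {n : ℕ}

/-- The Fourier transform of a real-valued Schwartz function, viewed as a ℂ-valued function. -/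
def ftC (f : SchwartzMap (Rn n) ℝ) : Rn n → ℂ :=
  𝓕 (fun x => (f x : ℂ))

/-- `ψ₀` is a Littlewood–Paley function: an even, radial Schwartz function whose Fourier
transform is nonnegative, supported in the annulus `{ξ : 1/2 < ‖ξ‖ < 2}`, and satisfies
`∑_{j ∈ ℤ} ψ̂₀(2^{-j} ξ) = 1` for `ξ ≠ 0`. -/
structure IsLPF (n : ℕ) (ψ₀ : SchwartzMap (Rn n) ℝ) : Prop where
  even : ∀ x : Rn n, ψ₀ (-x) = ψ₀ x
  radial : ∀ x y : Rn n, ‖x‖ = ‖y‖ → ψ₀ x = ψ₀ y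
  ft_im : ∀ ξ : Rn n, (ftC ψ₀ ξ).im = 0
  ft_nonneg : ∀ ξ : Rn n, 0 ≤ (ftC ψ₀ ξ).re
  ft_supp : ∀ ξ : Rn n, ftC ψ₀ ξ ≠ 0 → 1/2 < ‖ξ‖ ∧ ‖ξ‖ < 2
  ft_sum : ∀ ξ : Rn n, ξ ≠ 0 → HasSum (fun j : ℤ => ftC ψ₀ ((2:ℝ) ^ (-j) • ξ)) 1

/-- The Littlewood–Paley kernel `ψ_j(x) = 2^{jn} ψ₀(2^j x)`, whose Fourier transform is
`ψ̂₀(2^{-j} ξ)`. -/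
def lpKernel (ψ₀ : SchwartzMap (Rn n) ℝ) (j : ℤ) (x : Rn n) : ℝ :=
  (2:ℝ) ^ (j * (n:ℤ)) * ψ₀ ((2:ℝ) ^ j • x)

/-- The Littlewood–Paley projection `Δ_j f = ψ_j ∗ f`. -/
def lpProj (ψ₀ : SchwartzMap (Rn n) ℝ) (j : ℤ) (f : Rn n → ℝ) : Rn n → ℝ :=
  MeasureTheory.convolution (lpKernel ψ₀ j) f (ContinuousLinearMap.mul ℝ ℝ) volume

/-- `S_j f = ∑_{m ≤ j} Δ_m f`, the low-frequency cutoff; this is the L² function whose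
Fourier transform is `(∑_{m ≤ j} ψ̂₀(2^{-m} ξ)) f̂(ξ)`. -/
def lowProj (ψ₀ : SchwartzMap (Rn n) ℝ) (j : ℤ) (f : Rn n → ℝ) (x : Rn n) : ℝ :=
  ∑' m : ℤ, if m ≤ j then lpProj ψ₀ m f x else 0

/-- `Ψ` is the low-frequency piece of the Littlewood–Paley decomposition:
`Ψ̂ = 1 − ∑_{k ≥ 0} ψ̂_k`. -/
def IsLowPiece (ψ₀ Ψ : SchwartzMap (Rn n) ℝ) : Prop :=
  ∀ ξ : Rn n, ftC Ψ ξ = 1 - ∑' k : ℕ, ftC ψ₀ ((2:ℝ) ^ (-(k:ℤ)) • ξ)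

/-- The inhomogeneous Besov norm `‖f‖_{B^s_{p,q}}`, valued in `[0,∞]`:
`‖Ψ∗f‖_{L^p} + (∑_{j ≥ 0} (2^{js} ‖Δ_j f‖_{L^p})^q)^{1/q}`, with the supremum over `j`
replacing the `ℓ^q` sum when `q = ∞`. -/
def besovNorm (ψ₀ Ψ : SchwartzMap (Rn n) ℝ) (s : ℝ) (p q : ℝ≥0∞) (f : Rn n → ℝ) : ℝ≥0∞ :=
  eLpNorm (MeasureTheory.convolution (fun x => Ψ x) f (ContinuousLinearMap.mul ℝ ℝ) volume)
      p volume +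
    (if q = ∞ then
      ⨆ j : ℕ, ENNReal.ofReal ((2:ℝ) ^ ((j:ℝ) * s)) * eLpNorm (lpProj ψ₀ (j:ℤ) f) p volume
    else
      (∑' j : ℕ, (ENNReal.ofReal ((2:ℝ) ^ ((j:ℝ) * s)) *
        eLpNorm (lpProj ψ₀ (j:ℤ) f) p volume) ^ q.toReal) ^ (1 / q.toReal))

/-- The heat semigroup `e^{tΔ} f = h_t ∗ f` with `h_t(x) = (4πt)^{-n/2} e^{-‖x‖²/(4t)}`. -/
def heatOp (n : ℕ) (t : ℝ) (f : Rn n → ℝ) : Rn n → ℝ :=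
  MeasureTheory.convolution
    (fun x : Rn n => (4 * π * t) ^ (-(n:ℝ)/2) * Real.exp (-‖x‖^2 / (4*t))) f
    (ContinuousLinearMap.mul ℝ ℝ) volume

/-- The partial derivative `∂_{x_i} f`. -/
def pderiv' (i : Fin n) (f : Rn n → ℝ) (x : Rn n) : ℝ :=
  fderiv ℝ f x (EuclideanSpace.single i 1)

/-- The Laplacian `Δf = ∑ᵢ ∂²_{x_i} f`. -/
def lapl (f : Rn n → ℝ) (x : Rn n) : ℝ :=
  ∑ i : Fin n, pderiv' i (pderiv' i f) x

section helpers

/-- dilation -/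
def dil {E : Type*} [NormedAddCommGroup E] [NormedSpace ℝ E] (r : ℝ) (k : Rn n → E) (x : Rn n) : E :=
  r ^ n • k (r • x)

lemma int_smul {E : Type*} [NormedAddCommGroup E] [NormedSpace ℝ E] (F : Rn n → E) {r : ℝ}
    (hr : 0 < r) : ∫ x, F (r • x) = (r ^ n)⁻¹ • ∫ x, F x := by
  have := Measure.integral_comp_smul_of_nonneg (volume : Measure (Rn n)) F r (hR := hr.le)
  rwa [finrank_euclideanSpace, Fintype.card_fin] at this

lemma wpos (M : ℕ) (x : Rn n) : 0 < (1 + ‖x‖) ^ M := by positivity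

lemma conv_bound {𝕜 : Type*} [RCLike 𝕜] {k g : Rn n → 𝕜} {M : ℕ} {C A : ℝ}
    (hk : Integrable (fun y => ‖k y‖ * (1 + ‖y‖) ^ M))
    (hA : ∫ y, ‖k y‖ * (1 + ‖y‖) ^ M ≤ A)
    (hg : ∀ x, ‖g x‖ ≤ C * ((1 + ‖x‖) ^ M)⁻¹) (x : Rn n) :
    ‖MeasureTheory.convolution k g (ContinuousLinearMap.mul 𝕜 𝕜) volume x‖ ≤
      A * C * ((1 + ‖x‖) ^ M)⁻¹ := by
  have hC : 0 ≤ C := by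
    have := (norm_nonneg _).trans (hg 0)
    simpa using this
  have h1 : ‖MeasureTheory.convolution k g (ContinuousLinearMap.mul 𝕜 𝕜) volume x‖ ≤
      ∫ y, (‖k y‖ * (1 + ‖y‖) ^ M) * (C * ((1 + ‖x‖) ^ M)⁻¹) := by
    refine norm_integral_le_of_norm_le (hk.mul_const _) (Eventually.of_forall fun y => ?_)
    simp only [ContinuousLinearMap.mul_apply', norm_mul]
    rw [mul_assoc]
    refine mul_le_mul_of_nonneg_left ((hg _).trans ?_) (norm_nonneg _)
    rw [← mul_assoc, mul_comm _ C, mul_assoc]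
    refine mul_le_mul_of_nonneg_left ?_ hC
    rw [← div_eq_mul_inv, le_div_iff₀ (wpos M x), inv_mul_le_iff₀ (wpos M _), ← mul_pow]
    gcongr
    have : ‖x‖ ≤ ‖x - y‖ + ‖y‖ := by simpa using norm_add_le (x - y) y
    nlinarith [norm_nonneg (x - y), norm_nonneg y]
  rw [integral_mul_const] at h1
  refine h1.trans ?_
  rw [mul_assoc]
  have := wpos M x
  gcongr

lemma dil_weight {E : Type*} [NormedAddCommGroup E] [NormedSpace ℝ E] {k : Rn n → E} {M : ℕ}
    (hm : AEStronglyMeasurable k)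
    (hk : Integrable (fun y => ‖k y‖ * (1 + ‖y‖) ^ M)) {r : ℝ} (hr : 1 ≤ r) :
    Integrable (fun y => ‖dil r k y‖ * (1 + ‖y‖) ^ M) ∧
    ∫ y, ‖dil r k y‖ * (1 + ‖y‖) ^ M ≤ ∫ y, ‖k y‖ * (1 + ‖y‖) ^ M := by
  have hr0 : 0 < r := by linarith
  have hF : Integrable (fun y => ‖k y‖ * (1 + ‖r⁻¹ • y‖) ^ M) := by
    refine hk.mono (hm.norm.mul (by fun_prop)) (Eventually.of_forall fun y => ?_)
    rw [Real.norm_of_nonneg (by positivity), Real.norm_of_nonneg (by positivity)]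
    gcongr
    rw [norm_smul, norm_inv, Real.norm_of_nonneg hr0.le]
    exact mul_le_of_le_one_left (norm_nonneg _) (inv_le_one_of_one_le₀ hr)
  have heq : (fun y => ‖dil r k y‖ * (1 + ‖y‖) ^ M) =
      fun y => r ^ n * (fun z => ‖k z‖ * (1 + ‖r⁻¹ • z‖) ^ M) (r • y) := by
    ext y
    simp only [dil, norm_smul, norm_pow, norm_inv, Real.norm_of_nonneg hr0.le]
    rw [inv_mul_cancel_left₀ hr0.ne']
    ring
  rw [heq]
  refine ⟨((integrable_comp_smul_iff volume _ hr0.ne').2 hF).const_mul _, ?_⟩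
  rw [integral_const_mul, int_smul (fun z => ‖k z‖ * (1 + ‖r⁻¹ • z‖) ^ M) hr0, smul_eq_mul]
  rw [mul_inv_cancel_left₀ (by positivity)]
  refine integral_mono hF hk fun y => ?_
  simp only
  gcongr
  rw [norm_smul, norm_inv, Real.norm_of_nonneg hr0.le]
  exact mul_le_of_le_one_left (norm_nonneg _) (inv_le_one_of_one_le₀ hr)

lemma schwartz_bound {E : Type*} [NormedAddCommGroup E] [NormedSpace ℝ E]
    (g : SchwartzMap (Rn n) E) (M : ℕ) : ∃ C : ℝ, ∀ x, ‖g x‖ ≤ C * ((1 + ‖x‖) ^ M)⁻¹ := by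
  refine ⟨2 ^ M * (Finset.Iic (M, 0)).sup (fun m => SchwartzMap.seminorm ℝ m.1 m.2) g,
    fun x => ?_⟩
  rw [← div_eq_mul_inv, le_div_iff₀ (wpos M x), mul_comm]
  simpa using SchwartzMap.one_add_le_sup_seminorm_apply (𝕜 := ℝ) (m := (M, 0)) (k := M) (n := 0)
    le_rfl le_rfl g x

lemma schwartz_weight {E : Type*} [NormedAddCommGroup E] [NormedSpace ℝ E]
    (g : SchwartzMap (Rn n) E) (M : ℕ) :
    Integrable (fun y => ‖g y‖ * (1 + ‖y‖) ^ M) := by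
  obtain ⟨C, hC⟩ := schwartz_bound g (M + (n + 1))
  have hI : Integrable (fun x : Rn n => C * (1 + ‖x‖) ^ (-((n + 1 : ℕ) : ℝ))) :=
    (integrable_one_add_norm (by simp)).const_mul C
  refine hI.mono' ((g.continuous.norm.mul (by fun_prop)).aestronglyMeasurable)
    (Eventually.of_forall fun x => ?_)
  rw [Real.norm_of_nonneg (by positivity)]
  refine (mul_le_mul_of_nonneg_right (hC x) (wpos M x).le).trans (le_of_eq ?_)
  rw [Real.rpow_neg (by positivity), Real.rpow_natCast, pow_add]
  have := (wpos M x).ne'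
  have := (wpos (n+1) x).ne'
  field_simp

/-- The Gaussian at time one. -/
def gau (n : ℕ) (x : Rn n) : ℝ := (4 * π) ^ (-(n:ℝ)/2) * Real.exp (-‖x‖^2 / 4)

lemma gau_weight (M : ℕ) : Integrable (fun y : Rn n => ‖gau n y‖ * (1 + ‖y‖) ^ M) := by
  have hI : Integrable (fun x : Rn n => Real.exp (-(1/8) * ‖x‖^2)) := by
    have h := GaussianFourier.integrable_cexp_neg_mul_sq_norm_add (V := Rn n) (b := (1/8 : ℂ))
      (by norm_num) 0 0
    have h2 := h.norm
    refine h2.congr (Eventually.of_forall fun x => ?_)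
    simp only [Complex.norm_exp]
    congr 1
    simp [← Complex.ofReal_pow]
  refine (hI.const_mul ((4 * π) ^ (-(n:ℝ)/2) * (M.factorial * Real.exp 3))).mono' ?_
    (Eventually.of_forall fun x => ?_)
  · refine Continuous.aestronglyMeasurable ?_
    unfold gau
    fun_prop
  · rw [Real.norm_of_nonneg (by positivity)]
    unfold gau
    rw [Real.norm_of_nonneg (by positivity), mul_assoc, mul_assoc]
    refine mul_le_mul_of_nonneg_left ?_ (by positivity)
    have h1 : (1 + ‖x‖) ^ M ≤ M.factorial * Real.exp (1 + ‖x‖) := by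
      have := Real.pow_div_factorial_le_exp (1 + ‖x‖) (by positivity) M
      rwa [div_le_iff₀' (by positivity)] at this
    calc _ ≤ Real.exp (-‖x‖^2 / 4) * (M.factorial * Real.exp (1 + ‖x‖)) := by gcongr
      _ = M.factorial * Real.exp (-‖x‖^2 / 4 + (1 + ‖x‖)) := by
        rw [Real.exp_add (-‖x‖^2 / 4)]; ring
      _ ≤ M.factorial * Real.exp (3 + -(1/8) * ‖x‖^2) := by
        refine mul_le_mul_of_nonneg_left (Real.exp_le_exp.2 ?_) (by positivity)
        nlinarith [sq_nonneg (‖x‖ - 4)]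
      _ = _ := by rw [Real.exp_add]; ring

lemma heat_eq {t : ℝ} (ht : 0 < t) :
    (fun x : Rn n => (4 * π * t) ^ (-(n:ℝ)/2) * Real.exp (-‖x‖^2 / (4*t))) =
      dil (√t)⁻¹ (gau n) := by
  ext x
  have hs : 0 < √t := Real.sqrt_pos.2 ht
  simp only [dil, gau, norm_smul, norm_inv, Real.norm_of_nonneg hs.le, smul_eq_mul]
  rw [Real.mul_rpow (by positivity) ht.le, mul_pow, inv_pow _ 2, Real.sq_sqrt ht.le]
  have : t ^ (-(n:ℝ)/2) = (√t)⁻¹ ^ n := by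
    rw [Real.sqrt_eq_rpow, ← Real.rpow_neg ht.le, ← Real.rpow_natCast, ← Real.rpow_mul ht.le]
    congr 1; ring
  rw [this]
  have : -‖x‖^2 / (4*t) = -(t⁻¹ * ‖x‖^2) / 4 := by field_simp
  rw [this]; ring

lemma lpKernel_eq (ψ : SchwartzMap (Rn n) ℝ) (j : ℕ) :
    lpKernel ψ (j:ℤ) = dil ((2:ℝ)^j) ψ := by
  ext x
  simp only [lpKernel, dil, smul_eq_mul, zpow_mul, zpow_natCast]

lemma conv_assoc_aux {a b c : Rn n → ℝ} (ha : Integrable a) (hb : Integrable b)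
    (hc : Integrable c) {C : ℝ} (hC : ∀ x, ‖c x‖ ≤ C) (x : Rn n) :
    MeasureTheory.convolution (MeasureTheory.convolution a b (ContinuousLinearMap.mul ℝ ℝ) volume)
      c (ContinuousLinearMap.mul ℝ ℝ) volume x =
    MeasureTheory.convolution a (MeasureTheory.convolution b c (ContinuousLinearMap.mul ℝ ℝ) volume)
      (ContinuousLinearMap.mul ℝ ℝ) volume x := by
  refine convolution_assoc _ _ _ _ (fun x y z => by simp [mul_assoc]) ha.1 hb.1 hc.1
    (ha.ae_convolution_exists _ hb) (hb.norm.ae_convolution_exists _ hc.norm) ?_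
  have hI := hb.norm.integrable_convolution (ContinuousLinearMap.mul ℝ ℝ) hc.norm
  have hbd := conv_bound (k := fun x => ‖b x‖) (g := fun x => ‖c x‖) (M := 0) (C := C)
    (by simpa using hb.norm) le_rfl (by simpa using hC)
  simp only [pow_zero, inv_one, mul_one] at hbd
  unfold ConvolutionExistsAt
  simp only [ContinuousLinearMap.mul_apply']
  refine ha.norm.mul_bdd ?_ (Eventually.of_forall fun y => hbd _)
  exact hI.1.comp_quasiMeasurePreserving
    (quasiMeasurePreserving_sub_left_of_right_invariant volume x)

lemma conv_swap {a b c : Rn n → ℝ} (ha : Integrable a) (hb : Integrable b)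
    (hc : Integrable c) {C : ℝ} (hC : ∀ x, ‖c x‖ ≤ C) (x : Rn n) :
    MeasureTheory.convolution a (MeasureTheory.convolution b c (ContinuousLinearMap.mul ℝ ℝ) volume)
      (ContinuousLinearMap.mul ℝ ℝ) volume x =
    MeasureTheory.convolution b (MeasureTheory.convolution a c (ContinuousLinearMap.mul ℝ ℝ) volume)
      (ContinuousLinearMap.mul ℝ ℝ) volume x := by
  rw [← conv_assoc_aux ha hb hc hC, ← conv_assoc_aux hb ha hc hC]
  have : MeasureTheory.convolution a b (ContinuousLinearMap.mul ℝ ℝ) volume =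
      MeasureTheory.convolution b a (ContinuousLinearMap.mul ℝ ℝ) volume := by
    rw [← convolution_flip]
    congr 1
    ext; simp
  rw [this]

lemma integrable_of_weight {E : Type*} [NormedAddCommGroup E] {k : Rn n → E} {M : ℕ}
    (hm : AEStronglyMeasurable k)
    (hk : Integrable (fun y => ‖k y‖ * (1 + ‖y‖) ^ M)) : Integrable k := by
  refine hk.mono' hm (Eventually.of_forall fun x => ?_)
  exact le_mul_of_one_le_right (norm_nonneg _) (one_le_pow₀ (by linarith [norm_nonneg x]))


/-- dilation of a Schwartz function -/
def dilS (r : ℝ) (hr : r ≠ 0) (k : SchwartzMap (Rn n) ℂ) : SchwartzMap (Rn n) ℂ :=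
  (r ^ n) • SchwartzMap.compCLMOfContinuousLinearEquiv ℝ
    (ContinuousLinearEquiv.smulLeft (R₁ := ℝ) (M₁ := Rn n) (Units.mk0 r hr)) k

lemma dilS_coe (r : ℝ) (hr : r ≠ 0) (k : SchwartzMap (Rn n) ℂ) :
    (dilS r hr k : Rn n → ℂ) = dil r k := by
  ext x
  rfl

lemma fourier_dilS (r : ℝ) (hr : 0 < r) (k : SchwartzMap (Rn n) ℂ) (ξ : Rn n) :
    𝓕 (dilS r hr.ne' k) ξ = 𝓕 k (r⁻¹ • ξ) := by
  rw [SchwartzMap.fourier_coe, SchwartzMap.fourier_coe, dilS_coe, Real.fourier_eq, Real.fourier_eq]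
  have : (fun v => 𝐞 (-inner ℝ v ξ) • dil r k v) =
      fun v => r ^ n • (fun z => 𝐞 (-inner ℝ z (r⁻¹ • ξ)) • k z) (r • v) := by
    ext v
    simp only [dil]
    rw [inner_smul_left, inner_smul_right, smul_comm]
    simp [hr.ne']
  rw [this, integral_smul, int_smul (fun z => 𝐞 (-inner ℝ z (r⁻¹ • ξ)) • k z) hr]
  rw [smul_inv_smul₀ (by positivity)]

/-- complexification -/
def toC (f : SchwartzMap (Rn n) ℝ) : SchwartzMap (Rn n) ℂ :=
  f.postcompCLM Complex.ofRealCLM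

lemma toC_apply (f : SchwartzMap (Rn n) ℝ) (x : Rn n) : toC f x = (f x : ℂ) := rfl

lemma fourier_toC (f : SchwartzMap (Rn n) ℝ) (x : Rn n) : 𝓕 (toC f) x = ftC f x := rfl

lemma norm_conv_toC (k : SchwartzMap (Rn n) ℝ) (r : ℝ) (f : SchwartzMap (Rn n) ℝ) (x : Rn n) :
    ‖MeasureTheory.convolution (dil r (toC k)) (toC f) (ContinuousLinearMap.mul ℂ ℂ) volume x‖ =
    ‖MeasureTheory.convolution (dil r k) f (ContinuousLinearMap.mul ℝ ℝ) volume x‖ := by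
  rw [← Complex.norm_real]
  congr 1
  simp only [MeasureTheory.convolution, ← integral_complex_ofReal]
  congr 1
  ext y
  simp [dil, toC_apply]

lemma exists_phi (k : SchwartzMap (Rn n) ℂ)
    (hk : ∀ ξ, k ξ ≠ 0 → 1/2 < ‖ξ‖ ∧ ‖ξ‖ < 2) (N : ℕ) :
    ∃ φ : SchwartzMap (Rn n) ℂ, ∀ ξ, k ξ = ((‖ξ‖ ^ 2) ^ N : ℝ) * φ ξ := by
  have hcs : HasCompactSupport (fun ξ => ((((‖ξ‖ ^ 2) ^ N)⁻¹ : ℝ) : ℂ) * k ξ) := by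
    refine HasCompactSupport.of_support_subset_isCompact (isCompact_closedBall (0 : Rn n) 2) ?_
    intro ξ hξ
    have : k ξ ≠ 0 := by
      intro h
      simp [h] at hξ
    simpa using (hk ξ this).2.le
  have hsm : ContDiff ℝ (⊤ : ℕ∞) (fun ξ => ((((‖ξ‖ ^ 2) ^ N)⁻¹ : ℝ) : ℂ) * k ξ) := by
    rw [contDiff_iff_contDiffAt]
    intro ξ
    by_cases h0 : ξ = 0
    · subst h0
      have : (fun ξ => ((((‖ξ‖ ^ 2) ^ N)⁻¹ : ℝ) : ℂ) * k ξ) =ᶠ[nhds 0] fun _ => 0 := by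
        filter_upwards [Metric.ball_mem_nhds (0 : Rn n) (show (0:ℝ) < 1/2 by norm_num)] with y hy
        have : k y = 0 := by
          by_contra h
          have := (hk y h).1
          simp at hy
          linarith
        simp [this]
      exact contDiffAt_const.congr_of_eventuallyEq this
    · refine ContDiffAt.mul ?_ (k.smooth _).contDiffAt
      refine (Complex.ofRealCLM.contDiff.contDiffAt).comp ξ ?_
      refine ContDiffAt.inv ?_ (by positivity)
      exact ((contDiff_norm_sq ℝ).pow N).contDiffAt
  refine ⟨hcs.toSchwartzMap hsm, fun ξ => ?_⟩
  change k ξ = _ * (((((‖ξ‖ ^ 2) ^ N)⁻¹ : ℝ) : ℂ) * k ξ)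
  by_cases h : k ξ = 0
  · simp [h]
  · have := (hk ξ h).1
    have h2 : ((‖ξ‖ ^ 2) ^ N) ≠ 0 := by positivity
    rw [← mul_assoc, ← Complex.ofReal_mul, mul_inv_cancel₀ h2]
    simp

lemma lp_decay (ψ f : SchwartzMap (Rn n) ℝ)
    (hk : ∀ ξ, ftC ψ ξ ≠ 0 → 1/2 < ‖ξ‖ ∧ ‖ξ‖ < 2) (N M : ℕ) :
    ∃ K : ℝ, ∀ j : ℕ, ∀ x, ‖lpProj ψ (j:ℤ) f x‖ ≤
      (K * ((1/2:ℝ) ^ j) ^ (2 * N)) * ((1 + ‖x‖) ^ M)⁻¹ := by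
  obtain ⟨φ', hφ'⟩ := exists_phi (𝓕 (toC ψ)) hk N
  set φ : SchwartzMap (Rn n) ℂ := 𝓕⁻ φ' with hφ
  have hT : (fun ξ : Rn n => (((‖ξ‖ ^ 2) ^ N : ℝ) : ℂ)).HasTemperateGrowth := by fun_prop
  set g : SchwartzMap (Rn n) ℂ := 𝓕⁻ (SchwartzMap.smulLeftCLM ℂ
    (fun ξ : Rn n => (((‖ξ‖ ^ 2) ^ N : ℝ) : ℂ)) (𝓕 (toC f))) with hg
  obtain ⟨C, hC⟩ := schwartz_bound g M
  refine ⟨(∫ y, ‖φ y‖ * (1 + ‖y‖) ^ M) * C, fun j x => ?_⟩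
  have hr : (0:ℝ) < 2 ^ j := by positivity
  have key : SchwartzMap.convolution (ContinuousLinearMap.mul ℂ ℂ) (dilS (2^j) hr.ne' (toC ψ)) (toC f)
      = ((((1/2:ℝ) ^ j) ^ (2 * N) : ℝ) : ℂ) •
        SchwartzMap.convolution (ContinuousLinearMap.mul ℂ ℂ) (dilS (2^j) hr.ne' φ) g := by
    have hF : 𝓕 (SchwartzMap.convolution (ContinuousLinearMap.mul ℂ ℂ)
          (dilS (2^j) hr.ne' (toC ψ)) (toC f))
      = 𝓕 (((((1/2:ℝ) ^ j) ^ (2 * N) : ℝ) : ℂ) •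
        SchwartzMap.convolution (ContinuousLinearMap.mul ℂ ℂ) (dilS (2^j) hr.ne' φ) g) := by
      rw [FourierTransform.fourier_smul, SchwartzMap.fourier_convolution,
        SchwartzMap.fourier_convolution]
      ext ξ
      simp only [SchwartzMap.pairing_apply_apply, ContinuousLinearMap.mul_apply',
        smul_apply, hg, FourierTransform.fourier_fourierInv_eq,
        SchwartzMap.smulLeftCLM_apply_apply hT, smul_eq_mul]
      rw [fourier_dilS _ hr, fourier_dilS _ hr, hφ', hφ, FourierTransform.fourier_fourierInv_eq,
        norm_smul]
      simp only [norm_inv, norm_pow, Real.norm_ofNat, one_div]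
      push_cast
      simp only [one_div, inv_pow]
      ring
    have := congrArg (fun u : SchwartzMap (Rn n) ℂ => 𝓕⁻ u) hF
    simpa only [FourierTransform.fourierInv_fourier_eq] using this
  have key2 := congrArg (fun u : SchwartzMap (Rn n) ℂ => ‖u x‖) key
  simp only [smul_apply, norm_smul, SchwartzMap.convolution_apply, dilS_coe] at key2
  rw [norm_conv_toC] at key2
  unfold lpProj
  rw [lpKernel_eq, key2, Complex.norm_real, Real.norm_of_nonneg (by positivity)]
  obtain ⟨h1, h2⟩ := dil_weight (k := φ) φ.continuous.aestronglyMeasurable (schwartz_weight φ M)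
    (r := 2^j) (one_le_pow₀ (by norm_num))
  calc _ ≤ ((1/2:ℝ) ^ j) ^ (2 * N) * ((∫ y, ‖φ y‖ * (1 + ‖y‖) ^ M) * C * ((1 + ‖x‖) ^ M)⁻¹) := by
        gcongr
        exact conv_bound h1 h2 hC x
    _ = _ := by ring

lemma eLp_bound {u : Rn n → ℝ} {M : ℕ} {C : ℝ} (p : ℝ≥0∞)
    (hu : ∀ x, ‖u x‖ ≤ C * ((1 + ‖x‖) ^ M)⁻¹) :
    eLpNorm u p volume ≤ ENNReal.ofReal C *
      eLpNorm (fun x : Rn n => (1 + ‖x‖) ^ (-M : ℝ)) p volume := by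
  refine eLpNorm_le_mul_eLpNorm_of_ae_le_mul (Eventually.of_forall fun x => ?_) p
  refine (hu x).trans (le_of_eq ?_)
  rw [Real.rpow_neg (by positivity), Real.rpow_natCast, Real.norm_of_nonneg (by positivity)]

lemma heat_conv_bound {t : ℝ} (ht : 0 < t) (ht1 : t ≤ 1) {g : Rn n → ℝ} {M : ℕ} {C : ℝ}
    (hg : ∀ x, ‖g x‖ ≤ C * ((1 + ‖x‖) ^ M)⁻¹) (x : Rn n) :
    ‖heatOp n t g x‖ ≤ (∫ y, ‖gau n y‖ * (1 + ‖y‖) ^ M) * C * ((1 + ‖x‖) ^ M)⁻¹ := by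
  have hs : 0 < √t := Real.sqrt_pos.2 ht
  have hc : Continuous (gau n) := by unfold gau; fun_prop
  obtain ⟨h1, h2⟩ := dil_weight (k := gau n) hc.aestronglyMeasurable (gau_weight M)
    (r := (√t)⁻¹) ((one_le_inv₀ hs).2 (Real.sqrt_le_one.2 ht1))
  unfold heatOp
  rw [heat_eq ht]
  exact conv_bound h1 h2 hg x

lemma dil_integrable {k : Rn n → ℝ} (hk : Integrable k) {r : ℝ} (hr : 0 < r) :
    Integrable (dil r k) := by
  unfold dil
  exact ((integrable_comp_smul_iff volume k hr.ne').2 hk).smul (r ^ n)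

lemma lpProj_heat (ψ f : SchwartzMap (Rn n) ℝ) (j : ℕ) {t : ℝ} (ht : 0 < t) (x : Rn n) :
    lpProj ψ (j:ℤ) (heatOp n t f) x = heatOp n t (lpProj ψ (j:ℤ) f) x := by
  have hs : 0 < √t := Real.sqrt_pos.2 ht
  have hc : Continuous (gau n) := by unfold gau; fun_prop
  unfold lpProj heatOp
  rw [heat_eq ht, lpKernel_eq]
  obtain ⟨C, hC⟩ := schwartz_bound f 0
  refine conv_swap (dil_integrable ψ.integrable (by positivity))
    (dil_integrable (integrable_of_weight hc.aestronglyMeasurable (gau_weight 0)) (by positivity))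
    f.integrable (C := C) (by simpa using hC) x

lemma besov_bound (ψ Ψ f : SchwartzMap (Rn n) ℝ)
    (hk : ∀ ξ, ftC ψ ξ ≠ 0 → 1/2 < ‖ξ‖ ∧ ‖ξ‖ < 2) (s : ℝ) (p q : ℝ≥0∞) (hq : 1 ≤ q)
    (hq' : q < ∞) :
    ∃ B : ℝ≥0∞, B ≠ ∞ ∧ ∀ t : ℝ, 0 < t → t ≤ 1 → besovNorm ψ Ψ s p q (heatOp n t f) ≤ B := by
  obtain ⟨M, hM⟩ := (inferInstance : (volume : Measure (Rn n)).HasTemperateGrowth).exists_eLpNorm_lt_top p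
  obtain ⟨N, hN⟩ := exists_nat_ge (s + 1)
  obtain ⟨K, hK⟩ := lp_decay ψ f hk N M
  obtain ⟨C, hC⟩ := schwartz_bound f M
  set W := eLpNorm (fun x : Rn n => (1 + ‖x‖) ^ (-M : ℝ)) p volume
  set A := ∫ y, ‖gau n y‖ * (1 + ‖y‖) ^ M
  set D := ∫ y, ‖Ψ y‖ * (1 + ‖y‖) ^ M
  have hq1 : 1 ≤ q.toReal := by
    rw [← ENNReal.toReal_one]
    exact ENNReal.toReal_mono hq'.ne hq
  refine ⟨ENNReal.ofReal (D * (A * C)) * W +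
    (∑' j : ℕ, (ENNReal.ofReal (A * K) * W) ^ q.toReal * (2⁻¹ : ℝ≥0∞) ^ j) ^ (1 / q.toReal),
    ?_, fun t ht ht1 => ?_⟩
  · rw [ENNReal.tsum_mul_left]
    refine ENNReal.add_ne_top.2 ⟨ENNReal.mul_ne_top ENNReal.ofReal_ne_top hM.ne, ?_⟩
    refine ENNReal.rpow_ne_top_of_nonneg (by positivity) (ENNReal.mul_ne_top ?_ ?_)
    · exact ENNReal.rpow_ne_top_of_nonneg (by positivity)
        (ENNReal.mul_ne_top ENNReal.ofReal_ne_top hM.ne)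
    · rw [ENNReal.tsum_geometric]
      simp
  · unfold besovNorm
    rw [if_neg hq'.ne]
    refine add_le_add ?_ ?_
    · exact eLp_bound p (conv_bound (schwartz_weight Ψ M) le_rfl (heat_conv_bound ht ht1 hC))
    · refine ENNReal.rpow_le_rpow (ENNReal.tsum_le_tsum fun j => ?_) (by positivity)
      have h1 : eLpNorm (lpProj ψ (j:ℤ) (heatOp n t f)) p volume ≤
          ENNReal.ofReal (A * (K * ((1/2:ℝ) ^ j) ^ (2 * N))) * W := by
        refine eLp_bound p fun x => ?_
        rw [lpProj_heat ψ f j ht]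
        exact heat_conv_bound ht ht1 (hK j) x
      have h2 : ENNReal.ofReal ((2:ℝ) ^ ((j:ℝ) * s)) *
          eLpNorm (lpProj ψ (j:ℤ) (heatOp n t f)) p volume ≤
          (ENNReal.ofReal (A * K) * W) * (2⁻¹ : ℝ≥0∞) ^ j := by
        have h3 : (2:ℝ) ^ ((j:ℝ) * s) * ((1/2:ℝ) ^ j) ^ (2 * N) ≤ (1/2:ℝ) ^ j := by
          have e1 : ∀ m : ℕ, ((1/2:ℝ) ^ m) = (2:ℝ) ^ (-(m:ℝ)) := fun m => by
            rw [Real.rpow_neg (by norm_num), Real.rpow_natCast]; simp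
          rw [← pow_mul, e1, e1, ← Real.rpow_add (by norm_num)]
          refine Real.rpow_le_rpow_of_exponent_le (by norm_num) ?_
          push_cast
          have hj : (0:ℝ) ≤ j := Nat.cast_nonneg j
          have hN0 : (0:ℝ) ≤ N := Nat.cast_nonneg N
          nlinarith [mul_nonneg hj hN0, mul_nonneg hj (sub_nonneg.2 hN)]
        have h4 : (2⁻¹ : ℝ≥0∞) ^ j = ENNReal.ofReal ((1/2:ℝ) ^ j) := by
          rw [ENNReal.ofReal_pow (by norm_num)]
          congr 1
          rw [one_div, ENNReal.ofReal_inv_of_pos (by norm_num)]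
          simp
        calc _ ≤ ENNReal.ofReal ((2:ℝ) ^ ((j:ℝ) * s)) *
              (ENNReal.ofReal (A * (K * ((1/2:ℝ) ^ j) ^ (2 * N))) * W) := by gcongr
          _ = ENNReal.ofReal (A * K) * W *
              ENNReal.ofReal ((2:ℝ) ^ ((j:ℝ) * s) * ((1/2:ℝ) ^ j) ^ (2 * N)) := by
            rw [← mul_assoc A, ENNReal.ofReal_mul' (p := A * K) (by positivity),
              ENNReal.ofReal_mul (p := (2:ℝ) ^ ((j:ℝ) * s)) (by positivity)]
            ring
          _ ≤ _ := by
            rw [h4]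
            gcongr
      calc _ ≤ ((ENNReal.ofReal (A * K) * W) * (2⁻¹ : ℝ≥0∞) ^ j) ^ q.toReal := by gcongr
        _ = (ENNReal.ofReal (A * K) * W) ^ q.toReal * ((2⁻¹ : ℝ≥0∞) ^ j) ^ q.toReal :=
          ENNReal.mul_rpow_of_nonneg _ _ (by positivity)
        _ ≤ _ := by
          gcongr
          refine ENNReal.rpow_le_self_of_le_one ?_ hq1
          exact pow_le_one₀ (by simp) (by simp)

end helpers

/-- For `1 ≤ p₁ ≤ p₂ < ∞`, `0 < s₁ ≤ s₂`, `q ∈ [1,∞)` and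
`σ = s₂ − s₁ + n/p₁ − n/p₂ > 0`, one has `t^{σ/2} ‖e^{tΔ}f‖_{B^{s₂}_{p₂,q}} → 0` as
`t → 0⁺`, for every Schwartz `f`. -/
theorem besov_heat_vanishing_limit
    (n : ℕ) (hn : 1 ≤ n) (ψ₀ Ψ : SchwartzMap (Rn n) ℝ)
    (hψ : IsLPF n ψ₀) (hΨ : IsLowPiece ψ₀ Ψ)
    (p₁ p₂ : ℝ≥0∞) (hp₁ : 1 ≤ p₁) (hp₁₂ : p₁ ≤ p₂) (hp₂ : p₂ < ∞)
    (s₁ s₂ : ℝ) (hs₁ : 0 < s₁) (hs₁₂ : s₁ ≤ s₂)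
    (q : ℝ≥0∞) (hq : 1 ≤ q) (hq' : q < ∞)
    (σ : ℝ) (hσdef : σ = s₂ - s₁ + (n:ℝ)/p₁.toReal - (n:ℝ)/p₂.toReal) (hσ : 0 < σ)
    (f : SchwartzMap (Rn n) ℝ) :
    Filter.Tendsto
      (fun t : ℝ => ENNReal.ofReal (t ^ (σ/2)) *
        besovNorm ψ₀ Ψ s₂ p₂ q (heatOp n t (fun x => f x)))
      (nhdsWithin 0 (Set.Ioi 0)) (nhds 0) := by
  obtain ⟨B, hB, hb⟩ := besov_bound ψ₀ Ψ f hψ.ft_supp s₂ p₂ q hq hq'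
  have h1 : Tendsto (fun t : ℝ => ENNReal.ofReal (t ^ (σ/2)) * B)
      (nhdsWithin 0 (Set.Ioi 0)) (nhds 0) := by
    have h2 : Tendsto (fun t : ℝ => t ^ (σ/2)) (nhdsWithin 0 (Set.Ioi 0)) (nhds 0) := by
      have := (Real.continuousAt_rpow_const (0:ℝ) (σ/2) (Or.inr (by positivity))).tendsto
      rw [Real.zero_rpow (by positivity)] at this
      exact this.mono_left nhdsWithin_le_nhds
    have h3 := ENNReal.Tendsto.mul_const (b := B) (ENNReal.tendsto_ofReal h2) (Or.inr hB)
    simpa using h3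
  refine tendsto_of_tendsto_of_tendsto_of_le_of_le' tendsto_const_nhds h1
    (Eventually.of_forall fun _ => zero_le) ?_
  filter_upwards [Ioc_mem_nhdsGT (show (0:ℝ) < 1 by norm_num)] with t ht
  gcongr
  exact hb t ht.1 ht.2
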